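/- arXiv:1801.07530 — 4 statements merged into one kernel-verified Lean document; each statement's English description precedes it below -/
import Mathlib

section
/- In the mod-2 Steenrod algebra A, presented by the Adem relations, the subalgebra (over ℤ/2) generated by the set of elements {Sq^{2^n} : n ∈ ℕ} is all of A; equivalently, every Sq^k is a ℤ/2-linear combination of products of the elements Sq^1, Sq^2, Sq^4, Sq^8, … . -/
/-!
The algebra is generated by the `Sq k`, so it suffices to see that every `Sq k` lies in the
subalgebra `S` generated by the `Sq (2 ^ n)`; this goes by strong induction on `k`. If `k` is
neither `0` nor a power of two, write `k = a + 2 ^ m` with `0 < a < 2 ^ m`. In the Adem relation for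
`Sq a * Sq (2 ^ m)`, the term `c = 0` is `Sq k` with coefficient `binom(2 ^ m - 1, a)`, which is odd
(`choose_two_pow_sub_one`), while every other term, like the left-hand side, is a multiple of a
product of `Sq`s of index less than `k`. Solving for `Sq k` expresses it through elements already
known to lie in `S`.
-/

open scoped TensorProduct

noncomputable section

/-- The field `ℤ/2`. -/
abbrev F2 := ZMod 2

/-- The generator `Sq^k` in the free algebra over `ℤ/2` on generators indexed by `ℕ`. -/
def preSq (k : ℕ) : FreeAlgebra F2 ℕ := FreeAlgebra.ι F2 k

/-- The relations of the Adem presentation of the mod-2 Steenrod algebra: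
`Sq^0 = 1` together with the Adem relations
`Sq^a Sq^b = ∑_{c=0}^{⌊a/2⌋} binom(b-c-1, a-2c) Sq^{a+b-c} Sq^c` for `0 < a < 2b`. -/
inductive AdemRel : FreeAlgebra F2 ℕ → FreeAlgebra F2 ℕ → Prop
  | sq_zero : AdemRel (preSq 0) 1
  | adem (a b : ℕ) (ha : 0 < a) (hab : a < 2 * b) :
      AdemRel (preSq a * preSq b)
        (∑ c ∈ Finset.range (a / 2 + 1),
          ((Nat.choose (b - c - 1) (a - 2 * c) : F2)) • (preSq (a + b - c) * preSq c))

/-- The mod-2 Steenrod algebra, presented by the Adem relations. -/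
abbrev SteenrodAlgebra := RingQuot AdemRel

/-- The image of the generator `Sq^k` in the Steenrod algebra. -/
def Sq (k : ℕ) : SteenrodAlgebra := RingQuot.mkAlgHom F2 AdemRel (preSq k)

/-- The row `2 ^ m - 1` of Pascal's triangle is odd: consecutive entries sum to an entry of the row
`2 ^ m`, which is even away from its ends. -/
theorem choose_two_pow_sub_one (m a : ℕ) (ha : a < 2 ^ m) :
    ((Nat.choose (2 ^ m - 1) a : ℕ) : F2) = 1 := by
  induction a with
  | zero => simp
  | succ a ih =>
    have h1 : 2 ∣ Nat.choose (2 ^ m) (a + 1) :=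
      Nat.prime_two.dvd_choose_pow (by omega) (by omega)
    obtain ⟨N, hN⟩ : ∃ N, 2 ^ m = N + 1 := ⟨2 ^ m - 1, by omega⟩
    have ih := ih (by omega)
    rw [hN] at h1 ih ⊢
    rw [Nat.choose_succ_succ, ← ZMod.natCast_eq_zero_iff, Nat.cast_add] at h1
    simp only [Nat.add_sub_cancel] at ih ⊢
    rw [ih] at h1
    rw [← sub_eq_zero, CharTwo.sub_eq_add, add_comm]
    exact h1

theorem Sq_zero : Sq 0 = 1 := by
  have h := RingQuot.mkAlgHom_rel F2 AdemRel.sq_zero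
  rwa [map_one] at h

theorem Sq_adem (a b : ℕ) (ha : 0 < a) (hab : a < 2 * b) :
    Sq a * Sq b = ∑ c ∈ Finset.range (a / 2 + 1),
      ((Nat.choose (b - c - 1) (a - 2 * c) : F2)) • (Sq (a + b - c) * Sq c) := by
  have h := RingQuot.mkAlgHom_rel F2 (AdemRel.adem a b ha hab)
  simp only [map_mul, map_sum, map_smul] at h
  exact h

theorem Sq_mem_adjoin (k : ℕ) :
    Sq k ∈ Algebra.adjoin F2 (Set.range fun n : ℕ => Sq (2 ^ n)) := by
  induction k using Nat.strong_induction_on with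
  | _ k ih =>
    rcases Nat.eq_zero_or_pos k with rfl | hk
    · rw [Sq_zero]
      exact one_mem _
    have h1 : 2 ^ Nat.log 2 k ≤ k := Nat.pow_log_le_self 2 hk.ne'
    have h2 : k < 2 ^ (Nat.log 2 k + 1) := Nat.lt_pow_succ_log_self one_lt_two k
    generalize Nat.log 2 k = m at h1 h2
    rw [pow_succ] at h2
    obtain ⟨a, rfl⟩ := Nat.exists_eq_add_of_le' h1
    rcases Nat.eq_zero_or_pos a with rfl | ha
    · rw [zero_add]
      exact Algebra.subset_adjoin ⟨m, rfl⟩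
    have h := Sq_adem a (2 ^ m) ha (by omega)
    rw [Finset.sum_range_succ'] at h
    simp only [Nat.sub_zero, Nat.mul_zero, Sq_zero, mul_one] at h
    rw [choose_two_pow_sub_one m a (by omega), one_smul] at h
    rw [← sub_eq_of_eq_add' h]
    refine sub_mem (mul_mem (ih _ (by omega)) (ih _ (by omega))) (sum_mem fun c hc => ?_)
    rw [Finset.mem_range] at hc
    exact Subalgebra.smul_mem _ (mul_mem (ih _ (by omega)) (ih _ (by omega))) _

/-- The subalgebra over `ℤ/2` of the mod-2 Steenrod algebra generated by the
elements `Sq^{2^n}`, `n ∈ ℕ`, is all of the Steenrod algebra. -/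
theorem steenrod_generated_by_sq_two_pow :
    Algebra.adjoin F2 (Set.range fun n : ℕ => Sq (2 ^ n)) = ⊤ := by
  rw [eq_top_iff]
  rintro x -
  obtain ⟨y, rfl⟩ := RingQuot.mkAlgHom_surjective F2 AdemRel x
  induction y using FreeAlgebra.induction with
  | grade0 r =>
    rw [AlgHom.commutes]
    exact Subalgebra.algebraMap_mem _ r
  | grade1 k => exact Sq_mem_adjoin k
  | mul y z hy hz =>
    rw [map_mul]
    exact mul_mem hy hz
  | add y z hy hz =>
    rw [map_add]
    exact add_mem hy hz

end
end

section
/- Let R = (ℤ/2)[X]/(X²) and regard ℤ/2 as an R-module via the augmentation sending X to 0. Then for every natural number n, the Ext group Ext^n_R(ℤ/2, ℤ/2) has exactly 2 elements. -/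
/-!
Write `k = ℤ/2`. Multiplication by `X` identifies `k` with the kernel of the augmentation, so there
is a short exact sequence `0 ⟶ k ⟶ R ⟶ k ⟶ 0` of `R`-modules (`dualSES`). As `R` is projective,
the connecting map `Ext^n(k, k) ⟶ Ext^{n+1}(k, k)` is surjective. Its kernel is the image of
`Ext^n(R, k)` under restriction along `k ⟶ R`; this group vanishes for `n > 0`, and for `n = 0` the
restriction is zero because every linear map `R ⟶ k` kills `X`. So all the groups `Ext^n(k, k)`
have the same cardinality as `Ext^0(k, k) = Hom_R(k, k)`, whose elements are determined by the
image of `1`, which is arbitrary.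
-/

open CategoryTheory Polynomial

noncomputable section

/-- The ring `R = (ℤ/2)[X]/(X²)`. -/
abbrev DualNumbers2 : Type :=
  Polynomial (ZMod 2) ⧸ Ideal.span {(Polynomial.X : Polynomial (ZMod 2)) ^ 2}

/-- The augmentation `R → ℤ/2` sending `X` to `0`. -/
def dualAug : DualNumbers2 →+* ZMod 2 :=
  Ideal.Quotient.lift _ (Polynomial.evalRingHom (0 : ZMod 2)) (by
    intro a ha
    have h : Ideal.span {(Polynomial.X : Polynomial (ZMod 2)) ^ 2} ≤
        RingHom.ker (Polynomial.evalRingHom (0 : ZMod 2)) := by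
      rw [Ideal.span_le, Set.singleton_subset_iff]
      simp [RingHom.mem_ker]
    exact h ha)

/-- `ℤ/2`, regarded as a module over `R = (ℤ/2)[X]/(X²)` via the augmentation:
`X` acts as `0`. -/
instance : Module DualNumbers2 (ZMod 2) := Module.compHom (ZMod 2) dualAug

instance : HasExt.{1} (ModuleCat.{0} DualNumbers2) := by
  letI : HasDerivedCategory.{1} (ModuleCat.{0} DualNumbers2) := HasDerivedCategory.standard _
  apply hasExt_of_hasDerivedCategory

lemma dualNumbers2_mk_smul (p : Polynomial (ZMod 2)) (a : ZMod 2) :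
    (Ideal.Quotient.mk (Ideal.span {(X : Polynomial (ZMod 2)) ^ 2}) p : DualNumbers2) • a
      = p.eval 0 * a := rfl

/-- Multiplication by `X`, as the `R`-linear inclusion `ℤ/2 → R`, `a ↦ a X`. -/
def dualIncl : ZMod 2 →ₗ[DualNumbers2] DualNumbers2 where
  toFun a := Ideal.Quotient.mk _ (C a * X)
  map_add' a b := by simp [add_mul]
  map_smul' r a := by
    obtain ⟨p, rfl⟩ := Ideal.Quotient.mk_surjective r
    rw [dualNumbers2_mk_smul, RingHom.id_apply, smul_eq_mul, ← map_mul, Ideal.Quotient.eq,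
      Ideal.mem_span_singleton]
    obtain ⟨q, hq⟩ := X_dvd_sub_C (p := p)
    rw [coeff_zero_eq_eval_zero] at hq
    refine ⟨-(q * C a), ?_⟩
    rw [C_mul]
    linear_combination (-C a * X) * hq

/-- The augmentation, as an `R`-linear map. -/
def dualProj : DualNumbers2 →ₗ[DualNumbers2] ZMod 2 where
  toFun := dualAug
  map_add' := map_add _
  map_smul' r s := map_mul dualAug r s

lemma dualIncl_injective : Function.Injective dualIncl := by
  rw [injective_iff_map_eq_zero]
  intro a ha
  replace ha := Ideal.mem_span_singleton.1 (Ideal.Quotient.eq_zero_iff_mem.1 ha)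
  simpa using X_pow_dvd_iff.1 ha 1 one_lt_two

lemma dualProj_surjective : Function.Surjective dualProj := fun a =>
  ⟨Ideal.Quotient.mk _ (C a), by
    change (C a).eval 0 = a
    simp⟩

lemma dual_exact : Function.Exact dualIncl dualProj := by
  intro r
  obtain ⟨p, rfl⟩ := Ideal.Quotient.mk_surjective r
  change p.eval 0 = 0 ↔ _
  constructor
  · intro hp
    obtain ⟨q, rfl⟩ := X_dvd_iff.2 ((coeff_zero_eq_eval_zero p).trans hp)
    refine ⟨q.eval 0, ?_⟩
    change Ideal.Quotient.mk _ _ = _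
    rw [Ideal.Quotient.eq, Ideal.mem_span_singleton]
    obtain ⟨s, hs⟩ := X_dvd_sub_C (p := q)
    rw [coeff_zero_eq_eval_zero] at hs
    exact ⟨-s, by linear_combination (-X) * hs⟩
  · rintro ⟨a, ha⟩
    change Ideal.Quotient.mk _ _ = _ at ha
    rw [Ideal.Quotient.eq, Ideal.mem_span_singleton] at ha
    obtain ⟨s, hs⟩ := ha
    simpa using congrArg (eval 0) hs

/-- The sequence `ℤ/2 ⟶ R ⟶ ℤ/2` given by multiplication by `X` and the augmentation. -/
def dualSES : ShortComplex (ModuleCat.{0} DualNumbers2) :=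
  ShortComplex.mk (ModuleCat.ofHom dualIncl) (ModuleCat.ofHom dualProj) (by
    ext x
    exact dual_exact.apply_apply_eq_zero x)

lemma dualSES_shortExact : dualSES.ShortExact where
  exact := (ShortComplex.ShortExact.moduleCat_exact_iff_function_exact _).2 dual_exact
  mono_f := (ModuleCat.mono_iff_injective _).2 dualIncl_injective
  epi_g := (ModuleCat.epi_iff_surjective _).2 dualProj_surjective

instance : Projective dualSES.X₂ :=
  inferInstanceAs (Projective (ModuleCat.of DualNumbers2 DualNumbers2))

/-- Every linear map `R → ℤ/2` vanishes on the ideal generated by `X`. -/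
lemma comp_dualIncl (g : DualNumbers2 →ₗ[DualNumbers2] ZMod 2) : g ∘ₗ dualIncl = 0 := by
  refine LinearMap.ext fun a => ?_
  change g (Ideal.Quotient.mk _ (C a * X)) = 0
  have h := g.map_smul (Ideal.Quotient.mk _ (C a * X)) (1 : DualNumbers2)
  rw [smul_eq_mul, mul_one] at h
  refine h.trans ((dualNumbers2_mk_smul _ _).trans ?_)
  simp

lemma dualSES_f_comp (g : dualSES.X₂ ⟶ ModuleCat.of DualNumbers2 (ZMod 2)) :
    dualSES.f ≫ g = 0 :=
  ModuleCat.hom_ext (comp_dualIncl g.hom)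

/-- The connecting map `Ext^n(ℤ/2, ℤ/2) → Ext^{n+1}(ℤ/2, ℤ/2)` of `dualSES` is bijective. -/
lemma dual_connecting_bijective (n : ℕ) :
    Function.Bijective (fun x : Abelian.Ext dualSES.X₁ (ModuleCat.of DualNumbers2 (ZMod 2)) n =>
      dualSES_shortExact.extClass.comp x (add_comm 1 n)) := by
  constructor
  · intro x y hxy
    have h0 : dualSES_shortExact.extClass.comp (x - y) (add_comm 1 n) = 0 := by
      rw [sub_eq_add_neg, Abelian.Ext.comp_add, Abelian.Ext.comp_neg, ← sub_eq_add_neg,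
        sub_eq_zero]
      exact hxy
    obtain ⟨z, hz⟩ := Abelian.Ext.contravariant_sequence_exact₁ dualSES_shortExact _ _ _ h0
    rw [← sub_eq_zero, ← hz]
    cases n with
    | zero =>
      -- `Ext^0(R, k)` does not vanish, but its elements are morphisms, which restrict to zero.
      obtain ⟨g, rfl⟩ := (Abelian.Ext.mk₀_bijective _ _).2 z
      rw [Abelian.Ext.mk₀_comp_mk₀, dualSES_f_comp, Abelian.Ext.mk₀_zero]
    | succ n => rw [Abelian.Ext.eq_zero_of_projective z, Abelian.Ext.comp_zero]
  · intro y
    exact Abelian.Ext.contravariant_sequence_exact₃ dualSES_shortExact _ y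
      (Abelian.Ext.eq_zero_of_projective _) (add_comm 1 n)

/-- The endomorphisms of the `R`-module `ℤ/2` correspond to its elements, through the image
of `1`. -/
lemma card_end_dualNumbers :
    Nat.card (ModuleCat.of DualNumbers2 (ZMod 2) ⟶ ModuleCat.of DualNumbers2 (ZMod 2)) = 2 := by
  have hb : Function.Bijective (fun f : ZMod 2 →ₗ[DualNumbers2] ZMod 2 => f 1) := by
    constructor
    · intro f g hfg
      ext a
      obtain ⟨r, rfl⟩ := dualProj_surjective a
      have hr : dualProj r = r • (1 : ZMod 2) := (mul_one (dualAug r)).symm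
      rw [hr, map_smul, map_smul]
      exact congrArg (r • ·) hfg
    · intro a
      refine ⟨{ toFun := fun b => b * a, map_add' := fun b c => add_mul b c a,
                map_smul' := fun r b => mul_assoc (dualAug r) b a }, one_mul a⟩
  rw [Nat.card_congr ModuleCat.homEquiv]
  exact (Nat.card_congr (Equiv.ofBijective _ hb)).trans (Nat.card_zmod 2)

/-- For `R = (ℤ/2)[X]/(X²)` and `ℤ/2` the `R`-module on which `X` acts as `0`,
the group `Ext^n_R(ℤ/2, ℤ/2)` has exactly two elements, for every `n`. -/
theorem card_ext_dualNumbers (n : ℕ) :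
    Nat.card (Abelian.Ext (ModuleCat.of DualNumbers2 (ZMod 2))
      (ModuleCat.of DualNumbers2 (ZMod 2)) n) = 2 := by
  induction n with
  | zero => exact (Nat.card_congr Abelian.Ext.homEquiv₀).trans card_end_dualNumbers
  | succ n ih =>
    exact (Nat.card_congr (Equiv.ofBijective _ (dual_connecting_bijective n))).symm.trans ih

end
end

section
/- Fix m ≥ 1 and let E_m = (ℤ/2)[X_1, …, X_m]/(X_1², …, X_m²) be the exterior algebra on m generators over ℤ/2, and regard ℤ/2 as an E_m-module via the augmentation sending every X_i to 0. Then for every natural number s, the Ext group Ext^s_{E_m}(ℤ/2, ℤ/2) has exactly 2^{binom(s+m−1, m−1)} elements; that is, it is a ℤ/2-vector space of dimension binom(s+m−1, m−1), the dimension in degree s of a polynomial algebra on m generators. -/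
/-!
The divided-power Koszul complex `P_s = E_m ⊗ Γ_s[Y₁, …, Y_m]`, with `D γ_a = ∑ xⱼ γ_{a - eⱼ}`,
is a minimal free resolution of `ℤ/2` over `E_m`.

* Exactness: the partial derivatives `∂ᵢ` of polynomials descend to `E_m` in characteristic `2` and
  satisfy `∂ᵢ xᵢ = 1 + xᵢ ∂ᵢ`, `∂ᵢ xⱼ = xⱼ ∂ᵢ`. Hence `Hᵢ = Yᵢ ∂ᵢ` is a homotopy from the
  identity to an operator whose values do not involve `Yᵢ` (`koszulD_koszulH`). Running through all
  `i` makes a cycle of positive degree homologous to a multiple of `γ_0`, that is, to zero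
  (`koszul_exact`). In degree `0` the boundaries are the augmentation ideal
  (`range_koszulDs_zero`, `ker_extAlgAugₗ`).
* Minimality: `D` has image in `∑ xⱼ P_s`, so every `E_m`-linear map `P_s → ℤ/2` vanishes on
  boundaries (`map_koszulDs_eq_zero`).

Dimension shifting (`card_ext_of_minimal`) then gives `Ext^s ≃ Hom(P_s, ℤ/2)`, and `P_s` is free on
the monomials of degree `s` in `m` variables, of which there are `binom(s+m-1, m-1)`.
-/

open CategoryTheory

noncomputable section

/-- The exterior algebra `E_m = (ℤ/2)[X₁, …, X_m]/(X₁², …, X_m²)` on `m` generators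
over `ℤ/2`. -/
abbrev ExtAlg (m : ℕ) : Type :=
  MvPolynomial (Fin m) (ZMod 2) ⧸
    Ideal.span (Set.range fun i : Fin m => (MvPolynomial.X i : MvPolynomial (Fin m) (ZMod 2)) ^ 2)

/-- The augmentation `E_m → ℤ/2`, evaluation of all variables at `0`. -/
def extAlgAug (m : ℕ) : ExtAlg m →+* ZMod 2 :=
  Ideal.Quotient.lift _ (MvPolynomial.eval (fun _ : Fin m => (0 : ZMod 2))) (by
    intro a ha
    have h : Ideal.span (Set.range fun i : Fin m =>
          (MvPolynomial.X i : MvPolynomial (Fin m) (ZMod 2)) ^ 2) ≤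
        RingHom.ker (MvPolynomial.eval (fun _ : Fin m => (0 : ZMod 2))) := by
      rw [Ideal.span_le]
      rintro x ⟨i, rfl⟩
      simp [RingHom.mem_ker]
    exact h ha)

/-- `ℤ/2`, regarded as a module over `E_m` via the augmentation sending every `Xᵢ` to `0`. -/
instance (m : ℕ) : Module (ExtAlg m) (ZMod 2) := Module.compHom (ZMod 2) (extAlgAug m)

instance (m : ℕ) : HasExt.{1} (ModuleCat.{0} (ExtAlg m)) := by
  letI : HasDerivedCategory.{1} (ModuleCat.{0} (ExtAlg m)) := HasDerivedCategory.standard _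
  apply hasExt_of_hasDerivedCategory

/-! ### Dimension shifting along a minimal resolution -/

section Abstract
universe w v u
open Abelian
lemma card_ext_congr {C : Type u} [Category.{v} C] [Abelian C] [HasExt.{w} C] {X X' : C}
    (e : X ≅ X') (Y : C) (n : ℕ) : Nat.card (Ext X Y n) = Nat.card (Ext X' Y n) := by
  have he : Function.Bijective
      ((Ext.mk₀ e.hom).precomp Y (zero_add n) : Ext X' Y n →+ Ext X Y n) := by
    refine Function.bijective_iff_has_inverse.2
      ⟨(Ext.mk₀ e.inv).precomp Y (zero_add n), fun x => ?_, fun x => ?_⟩ <;> simp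
  exact (Nat.card_congr (Equiv.ofBijective _ he)).symm

/-- Dimension shifting along a minimal projective resolution, cut into short exact sequences
`0 → Zₙ₊₁ → Pₙ → Zₙ → 0`. Minimality relative to `Y` is the hypothesis `hmin`: every map
`Pₙ ⟶ Y` vanishes on `Zₙ₊₁`. It makes all connecting maps `Extᵏ(Zₙ₊₁, Y) → Extᵏ⁺¹(Zₙ, Y)`
bijective, including `k = 0`, and identifies `Hom(Zₙ, Y)` with `Hom(Pₙ, Y)`. -/
lemma card_ext_of_minimal {C : Type u} [Category.{v} C] [Abelian C] [HasExt.{w} C] (Y : C)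
    (S : ℕ → ShortComplex C) (hS : ∀ n, (S n).ShortExact) (hP : ∀ n, Projective (S n).X₂)
    (e : ∀ n, (S n).X₁ ≅ (S (n + 1)).X₃)
    (hmin : ∀ n (g : (S n).X₂ ⟶ Y), (S n).f ≫ g = 0) (k n : ℕ) :
    Nat.card (Ext (S n).X₃ Y k) = Nat.card ((S (n + k)).X₂ ⟶ Y) := by
  induction k generalizing n with
  | zero =>
    have := (hS n).epi_g
    refine Nat.card_congr (Ext.homEquiv₀.trans
      (Equiv.ofBijective (fun g => (S n).g ≫ g) ⟨fun a b h => ?_, fun g => ?_⟩))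
    · exact (cancel_epi _).1 h
    · exact ⟨(hS n).gIsCokernel.desc (Limits.CokernelCofork.ofπ g (hmin n g)),
        (hS n).gIsCokernel.fac _ Limits.WalkingParallelPair.one⟩
  | succ k ih =>
    have hδ : Function.Bijective ((hS n).extClass.precomp Y (add_comm 1 k)) := by
      constructor
      · rw [injective_iff_map_eq_zero]
        -- The kernel of the connecting map consists of restrictions of classes on `Pₙ`, which
        -- vanish by minimality in degree `0` and by projectivity in positive degrees.
        intro x hx
        obtain ⟨y, rfl⟩ := Ext.contravariant_sequence_exact₁ (hS n) Y x (add_comm 1 k) hx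
        cases k with
        | zero =>
          obtain ⟨g, rfl⟩ := (Ext.mk₀_bijective _ _).2 y
          rw [Ext.mk₀_comp_mk₀, hmin, Ext.mk₀_zero]
        | succ k => rw [Ext.eq_zero_of_projective y, Ext.comp_zero]
      · exact fun x =>
          Ext.contravariant_sequence_exact₃ (hS n) Y x (Ext.eq_zero_of_projective _) (add_comm 1 k)
    rw [← Nat.card_congr (Equiv.ofBijective _ hδ), card_ext_congr (e n),
      ih (n + 1), show n + 1 + k = n + (k + 1) by omega]

end Abstract

/-! ### The divided-power Koszul complex and its contraction -/

section Complex
variable {ι : Type} [Fintype ι] [DecidableEq ι] {R : Type} [CommRing R]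

/-- The differential `D = ∑ xⱼ Sⱼ` of the divided-power Koszul complex `R ⊗ Γ[ι]`. An element
`∑ f a • γ_a` is encoded by its coefficient function `f : (ι → ℕ) → R`; the function space also
contains infinite sums, but only its homogeneous parts `homog ι R s` matter. The shift `Sⱼ`
lowers the exponent of the `j`-th variable, `γ_a ↦ γ_{a - eⱼ}`. -/
def koszulD (x : ι → R) : ((ι → ℕ) → R) →ₗ[R] ((ι → ℕ) → R) where
  toFun f a := ∑ j, x j * f (a + Pi.single j 1)
  map_add' f g := by ext a; simp [mul_add, Finset.sum_add_distrib]
  map_smul' r f := by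
    ext a; simp only [Pi.smul_apply, smul_eq_mul, Finset.mul_sum, RingHom.id_apply]
    exact Finset.sum_congr rfl fun j _ => by ring

lemma koszulD_apply (x : ι → R) (f : (ι → ℕ) → R) (a : ι → ℕ) :
    koszulD x f a = ∑ j, x j * f (a + Pi.single j 1) := rfl

variable (ι R) in
/-- The degree `s` part of the divided-power Koszul complex: coefficient functions supported on
the multi-indices of total degree `s`. -/
def homog (s : ℕ) : Submodule R ((ι → ℕ) → R) where
  carrier := {f | ∀ a, ∑ i, a i ≠ s → f a = 0}
  add_mem' hf hg a ha := by simp [hf a ha, hg a ha]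
  zero_mem' _ _ := rfl
  smul_mem' r f hf a ha := by simp [hf a ha]

lemma koszulD_mem (x : ι → R) {s : ℕ} {f : (ι → ℕ) → R} (hf : f ∈ homog ι R (s + 1)) :
    koszulD x f ∈ homog ι R s := by
  intro a ha
  rw [koszulD_apply]
  refine Finset.sum_eq_zero fun j _ => ?_
  rw [hf _ (by simpa [Finset.sum_add_distrib] using ha), mul_zero]

/-- `D² = ∑ xⱼ xₖ Sⱼ Sₖ`: the diagonal terms vanish because `xⱼ² = 0`, and the others cancel in
pairs in characteristic `2`. -/
lemma koszulD_koszulD [CharP R 2] (x : ι → R) (hx : ∀ i, x i ^ 2 = 0) (f : (ι → ℕ) → R) :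
    koszulD x (koszulD x f) = 0 := by
  ext a
  simp only [koszulD_apply, Finset.mul_sum, Pi.zero_apply]
  rw [← Finset.sum_product']
  refine Finset.sum_involution (fun p _ => p.swap) ?_ ?_ (by simp) (by simp)
  · rintro ⟨j, k⟩ -
    simp only [Prod.swap, add_right_comm a (Pi.single k 1)]
    rw [mul_left_comm, CharTwo.add_self_eq_zero]
  · rintro ⟨j, k⟩ - h h'
    obtain rfl : k = j := congrArg Prod.fst h'
    apply h
    rw [← mul_assoc, ← pow_two, hx, zero_mul]

/-- The contracting operator `Hᵢ = Yᵢ dᵢ`, where `Yᵢ` raises the exponent of the `i`-th variable,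
`γ_a ↦ γ_{a + eᵢ}`, and `dᵢ`, standing for `∂/∂xᵢ`, acts on coefficients. -/
def koszulH (d : ι → R →+ R) (i : ι) (f : (ι → ℕ) → R) (a : ι → ℕ) : R :=
  if a i = 0 then 0 else d i (f (a - Pi.single i 1))

lemma koszulH_mem (d : ι → R →+ R) (i : ι) {s : ℕ} {f : (ι → ℕ) → R} (hf : f ∈ homog ι R s) :
    koszulH d i f ∈ homog ι R (s + 1) := by
  intro a ha
  unfold koszulH
  split_ifs with h
  · rfl
  · rw [hf, map_zero]
    rintro rfl
    apply ha
    have : a = (a - Pi.single i 1) + Pi.single i 1 := by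
      ext j
      by_cases hj : j = i
      · subst hj; simp; omega
      · simp [hj]
    conv_lhs => rw [this]
    simp [Finset.sum_add_distrib]

/-- On cycles, `1 - D Hᵢ` is the operator that applies `dᵢ xᵢ` to the coefficients of the
multi-indices not involving `i` and kills all others. This comes from `dᵢ xᵢ = 1 + xᵢ dᵢ` and
from `dᵢ` commuting with `xⱼ` for `j ≠ i`; signs play no role in characteristic `2`. -/
lemma koszulD_koszulH [CharP R 2] (x : ι → R) (d : ι → R →+ R)
    (hd : ∀ i r, d i (x i * r) = r + x i * d i r)
    (hd' : ∀ i j, i ≠ j → ∀ r, d i (x j * r) = x j * d i r)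
    (f : (ι → ℕ) → R) (hf : koszulD x f = 0) (i : ι) (a : ι → ℕ) :
    f a - koszulD x (koszulH d i f) a = if a i = 0 then d i (x i * f a) else 0 := by
  have hi : koszulH d i f (a + Pi.single i 1) = d i (f a) := by
    simp [koszulH]
  have hj (j) (hj : j ≠ i) : koszulH d i f (a + Pi.single j 1) =
      if a i = 0 then 0 else d i (f (a - Pi.single i 1 + Pi.single j 1)) := by
    simp only [koszulH, Pi.add_apply, Pi.single_apply, if_neg hj.symm, add_zero]
    split_ifs with h
    · rfl
    · congr 2
      ext k
      by_cases hk : k = i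
      · subst hk; simp [hj.symm]
      · simp [hk]
  rw [koszulD_apply, ← Finset.add_sum_erase _ _ (Finset.mem_univ i), hi, CharTwo.sub_eq_add]
  split_ifs with h
  · rw [Finset.sum_eq_zero, hd, add_zero]
    intro j hj'
    rw [hj j (Finset.ne_of_mem_erase hj'), if_pos h, mul_zero]
  · have hb : a - Pi.single i 1 + Pi.single i 1 = a := by
      ext k
      by_cases hk : k = i
      · subst hk; simp; omega
      · simp [hk]
    -- The identity is `dᵢ` applied to the cycle condition at the multi-index `a - eᵢ`.
    have := congrArg (d i) (congrFun hf (a - Pi.single i 1))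
    rw [koszulD_apply, map_sum, ← Finset.add_sum_erase _ _ (Finset.mem_univ i), hb, hd,
      Pi.zero_apply, map_zero, add_assoc] at this
    convert this using 4 with j hj'
    rw [hj j (Finset.ne_of_mem_erase hj'), if_neg h,
      hd' i j (Finset.ne_of_mem_erase hj').symm]

/-- Exactness in positive degree. -/
lemma koszul_exact [CharP R 2] (x : ι → R) (hx : ∀ i, x i ^ 2 = 0) (d : ι → R →+ R)
    (hd : ∀ i r, d i (x i * r) = r + x i * d i r)
    (hd' : ∀ i j, i ≠ j → ∀ r, d i (x j * r) = x j * d i r)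
    {s : ℕ} {z : (ι → ℕ) → R} (hz : z ∈ homog ι R (s + 1)) (hDz : koszulD x z = 0) :
    ∃ w ∈ homog ι R (s + 2), koszulD x w = z := by
  -- Modulo boundaries, the variables in `T` can be removed from `z` one at a time.
  have key (T : Finset ι) : ∃ w ∈ homog ι R (s + 2),
      ∀ a, (∃ i ∈ T, a i ≠ 0) → (z - koszulD x w) a = 0 := by
    induction T using Finset.induction_on with
    | empty => exact ⟨0, zero_mem _, by simp⟩
    | insert i T _ ih =>
      obtain ⟨w, hw, h⟩ := ih
      set z' := z - koszulD x w with hz'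
      have hz'm : z' ∈ homog ι R (s + 1) := sub_mem hz (koszulD_mem x hw)
      have hDz' : koszulD x z' = 0 := by
        rw [hz', map_sub, hDz, koszulD_koszulD x hx, sub_zero]
      refine ⟨w + koszulH d i z', add_mem hw (koszulH_mem d i hz'm), ?_⟩
      rintro a ⟨k, hk, hak⟩
      rw [map_add, ← sub_sub, ← hz', Pi.sub_apply, koszulD_koszulH x d hd hd' z' hDz']
      split_ifs with h0
      · obtain rfl | hk := Finset.mem_insert.1 hk
        · exact absurd h0 hak
        · rw [h a ⟨k, hk, hak⟩, mul_zero, map_zero]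
      · rfl
  obtain ⟨w, hw, h⟩ := key Finset.univ
  refine ⟨w, hw, ?_⟩
  rw [eq_comm, ← sub_eq_zero]
  ext a
  by_cases ha : ∃ i, a i ≠ 0
  · exact h a (by simpa using ha)
  · push Not at ha
    -- The remaining multi-index `a = 0` has degree `0`, not `s + 1`.
    exact sub_mem hz (koszulD_mem x hw) a (by simp [ha])

variable (ι R) in
/-- The degree `s` part is free on the monomials of degree `s`. -/
def homogEquiv (s : ℕ) : homog ι R s ≃ₗ[R] ({a : ι → ℕ // ∑ i, a i = s} → R) where
  toFun f a := f.1 a.1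
  map_add' _ _ := rfl
  map_smul' _ _ := rfl
  invFun g := ⟨fun a => if h : ∑ i, a i = s then g ⟨a, h⟩ else 0, fun a ha => dif_neg ha⟩
  left_inv f := by
    ext a
    by_cases h : ∑ i, a i = s
    · simp [h]
    · simp [h, f.2 a h]
  right_inv g := by ext a; simp [a.2]

/-- The differential `D` from degree `s + 1` to degree `s`. -/
def koszulDs (x : ι → R) (s : ℕ) : homog ι R (s + 1) →ₗ[R] homog ι R s :=
  (koszulD x).restrict fun _ hf => koszulD_mem x hf

lemma ker_koszulDs [CharP R 2] (x : ι → R) (hx : ∀ i, x i ^ 2 = 0) (d : ι → R →+ R)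
    (hd : ∀ i r, d i (x i * r) = r + x i * d i r)
    (hd' : ∀ i j, i ≠ j → ∀ r, d i (x j * r) = x j * d i r) (s : ℕ) :
    LinearMap.ker (koszulDs x s) = LinearMap.range (koszulDs x (s + 1)) := by
  ext ⟨z, hz⟩
  constructor
  · intro h
    obtain ⟨w, hw, hwz⟩ := koszul_exact x hx d hd hd' hz (congrArg Subtype.val h)
    exact ⟨⟨w, hw⟩, Subtype.ext hwz⟩
  · rintro ⟨⟨w, hw⟩, h⟩
    obtain rfl : koszulD x w = z := congrArg Subtype.val h
    exact Subtype.ext (koszulD_koszulD x hx w)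

/-- Minimality: the boundaries lie in `∑ xⱼ • homog ι R s`, so a linear map to a module killed by
all `xⱼ` vanishes on them. -/
lemma map_koszulDs_eq_zero {k : Type} [AddCommGroup k] [Module R k] (x : ι → R)
    (hk : ∀ i (c : k), x i • c = 0) (s : ℕ) (g : homog ι R s →ₗ[R] k) (w : homog ι R (s + 1)) :
    g (koszulDs x s w) = 0 := by
  have hS (j : ι) : (fun a => w.1 (a + Pi.single j 1)) ∈ homog ι R s := fun a ha =>
    w.2 _ (by simpa [Finset.sum_add_distrib] using ha)
  have : koszulDs x s w = ∑ j, x j • (⟨_, hS j⟩ : homog ι R s) := by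
    ext a
    simp [koszulDs, koszulD_apply]
  rw [this, map_sum]
  exact Finset.sum_eq_zero fun j _ => by rw [map_smul, hk]

/-- Exactness in degree `0`, where an element is just its coefficient at the multi-index `0`: the
boundaries are the kernel of the augmentation `f ↦ ε (f 0)`. -/
lemma range_koszulDs_zero (x : ι → R) {k : Type} [AddCommGroup k] [Module R k]
    (ε : R →ₗ[R] k) (hε : LinearMap.ker ε = Ideal.span (Set.range x)) :
    LinearMap.range (koszulDs x 0) =
      LinearMap.ker (ε ∘ₗ LinearMap.proj (0 : ι → ℕ) ∘ₗ (homog ι R 0).subtype) := by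
  ext ⟨z, hz⟩
  have hz0 (a : ι → ℕ) (ha : a ≠ 0) : z a = 0 := hz a fun h => ha (by
    ext i; simpa using Finset.sum_eq_zero_iff.1 h i)
  constructor
  · rintro ⟨⟨w, hw⟩, h⟩
    obtain rfl : koszulD x w = z := congrArg Subtype.val h
    change koszulD x w 0 ∈ LinearMap.ker ε
    rw [hε, koszulD_apply]
    exact sum_mem fun j _ => Ideal.mul_mem_right _ _ (Ideal.subset_span ⟨j, rfl⟩)
  · intro h
    have h : z 0 ∈ LinearMap.ker ε := h
    rw [hε] at h
    obtain ⟨c, hc⟩ := (Ideal.mem_span_range_iff_exists_fun).1 h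
    -- `w = ∑ cᵢ γ_{eᵢ}` satisfies `D w = (∑ cᵢ xᵢ) γ_0 = z`.
    have hw : (fun a : ι → ℕ => ∑ i, if a = Pi.single i 1 then c i else 0) ∈ homog ι R 1 := by
      intro a ha
      refine Finset.sum_eq_zero fun i _ => if_neg ?_
      rintro rfl
      simp at ha
    · refine ⟨⟨_, hw⟩, ?_⟩
      ext a
      change koszulD x (fun a : ι → ℕ => ∑ i, if a = Pi.single i 1 then c i else 0) a = z a
      by_cases ha : a = 0
      · subst ha
        rw [koszulD_apply, ← hc]
        refine Finset.sum_congr rfl fun j _ => ?_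
        rw [Finset.sum_eq_single j]
        · simp [mul_comm]
        · intro i _ hij
          rw [if_neg]
          intro h
          have := congrFun h i
          simp [hij] at this
        · simp
      · rw [hz0 a ha, koszulD_apply]
        refine Finset.sum_eq_zero fun j _ => ?_
        rw [Finset.sum_eq_zero, mul_zero]
        intro i _
        rw [if_neg]
        intro h
        apply ha
        have h1 := congrArg (fun b : ι → ℕ => ∑ i, b i) h
        simp [Finset.sum_add_distrib] at h1
        ext i
        simp [h1]

lemma card_hom_homog {k : Type} [AddCommGroup k] [Module R k] [Finite k] (s : ℕ) :
    Nat.card (homog ι R s →ₗ[R] k) = Nat.card k ^ (Fintype.card ι).multichoose s := by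
  have e1 := (Sym.equivNatSumOfFintype ι s)
  have : Fintype {a : ι → ℕ // ∑ i, a i = s} := Fintype.ofEquiv _ e1
  rw [Nat.card_congr (((homogEquiv ι R s).arrowCongr (LinearEquiv.refl R k)).toEquiv.trans
    ((Pi.basisFun R {a : ι → ℕ // ∑ i, a i = s}).constr ℕ).symm.toEquiv), Nat.card_fun,
    ← Nat.card_congr e1, Nat.card_eq_fintype_card (α := Sym ι s), Sym.card_sym_eq_multichoose]

end Complex

/-! ### Ext over an algebra with derivations dual to the generators -/

section Main
open Abelian
universe w

/-- If `xᵢ² = 0` in a ring of characteristic `2` and there are additive operators `dᵢ` satisfying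
the commutation relations of `∂/∂xᵢ`, then `Extˢ` of `k = R ⧸ (xᵢ)` by itself is counted by
functions from the monomials of degree `s` to `k`. -/
lemma card_ext_of_koszul {ι : Type} [Fintype ι] [DecidableEq ι] {R : Type} [CommRing R]
    [CharP R 2] [HasExt.{w} (ModuleCat.{0} R)]
    (x : ι → R) (hx : ∀ i, x i ^ 2 = 0) (d : ι → R →+ R)
    (hd : ∀ i r, d i (x i * r) = r + x i * d i r)
    (hd' : ∀ i j, i ≠ j → ∀ r, d i (x j * r) = x j * d i r)
    {k : Type} [AddCommGroup k] [Module R k] [Finite k]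
    (ε : R →ₗ[R] k) (hε : LinearMap.ker ε = Ideal.span (Set.range x))
    (hε' : Function.Surjective ε) (s : ℕ) :
    Nat.card (Ext (ModuleCat.of R k) (ModuleCat.of R k) s) =
      Nat.card k ^ (Fintype.card ι).multichoose s := by
  have hk (i : ι) (c : k) : x i • c = 0 := by
    obtain ⟨r, rfl⟩ := hε' c
    rw [← map_smul, ← LinearMap.mem_ker, hε, smul_eq_mul]
    exact Ideal.mul_mem_right _ _ (Ideal.subset_span ⟨i, rfl⟩)
  -- The sequences `0 → Bₙ → Pₙ → Pₙ ⧸ Bₙ → 0`, where `Bₙ` is the boundaries in degree `n`.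
  let S (n : ℕ) : ShortComplex (ModuleCat.{0} R) :=
    (LinearMap.range (koszulDs x n)).mkQ.shortComplexKer
  have hP (n : ℕ) : Projective (S n).X₂ := by
    have : Module.Free R (homog ι R n) := by
      have : Finite {a : ι → ℕ // ∑ i, a i = n} := .of_equiv _ (Sym.equivNatSumOfFintype ι n)
      exact Module.Free.of_equiv (homogEquiv ι R n).symm
    exact (IsProjective.iff_projective (homog ι R n)).1 inferInstance
  have e (n : ℕ) : (S n).X₁ ≅ (S (n + 1)).X₃ := LinearEquiv.toModuleIso <|
    (LinearEquiv.ofEq _ _ (Submodule.ker_mkQ _)).trans <|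
      (koszulDs x n).quotKerEquivRange.symm.trans
        (Submodule.quotEquivOfEq _ _ (ker_koszulDs x hx d hd hd' n))
  have hmin (n : ℕ) (g : (S n).X₂ ⟶ ModuleCat.of R k) : (S n).f ≫ g = 0 := by
    ext ⟨y, hy⟩
    rw [Submodule.ker_mkQ] at hy
    obtain ⟨w, rfl⟩ := hy
    exact map_koszulDs_eq_zero x hk n g.hom w
  have e0 : (S 0).X₃ ≅ ModuleCat.of R k := LinearEquiv.toModuleIso <|
    (Submodule.quotEquivOfEq _ _ (range_koszulDs_zero x ε hε)).trans <|
      LinearMap.quotKerEquivOfSurjective _ fun c => by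
        obtain ⟨r, rfl⟩ := hε' c
        refine ⟨⟨fun a => if a = 0 then r else 0, fun a ha => if_neg ?_⟩, ?_⟩
        · rintro rfl
          simp at ha
        · change ε (if (0 : ι → ℕ) = 0 then r else 0) = ε r
          rw [if_pos rfl]
  rw [← card_ext_congr e0, card_ext_of_minimal _ S
    (fun n => LinearMap.shortExact_shortComplexKer (Submodule.mkQ_surjective _)) hP e hmin,
    zero_add, ← card_hom_homog (R := R) (ι := ι) (k := k)]
  exact Nat.card_congr ModuleCat.homEquiv

/-! ### The exterior algebra -/

/-- The derivation `∂/∂Xᵢ` of `E_m`. It is well defined since `∂(Xⱼ²) = 2 Xⱼ ∂Xⱼ = 0`. -/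
def extAlgD (m : ℕ) (i : Fin m) : ExtAlg m →+ ExtAlg m :=
  QuotientAddGroup.map _ _ (MvPolynomial.pderiv (R := ZMod 2) i).toLinearMap.toAddMonoidHom (by
    intro p hp
    change MvPolynomial.pderiv i p ∈ Ideal.span _
    refine Submodule.span_induction (p := fun p _ => MvPolynomial.pderiv i p ∈ Ideal.span _)
      ?_ (by simp) (fun p q _ _ hp hq => by rw [map_add]; exact add_mem hp hq) ?_ hp
    · rintro _ ⟨j, rfl⟩
      rw [Derivation.leibniz_pow, CharTwo.two_nsmul]
      exact zero_mem _
    · intro a p hp h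
      rw [smul_eq_mul, Derivation.leibniz]
      exact add_mem (Ideal.mul_mem_left _ _ h) (Ideal.mul_mem_right _ _ hp))

lemma extAlgD_mk (m : ℕ) (i : Fin m) (p : MvPolynomial (Fin m) (ZMod 2)) :
    extAlgD m i (Ideal.Quotient.mk _ p) = Ideal.Quotient.mk _ (MvPolynomial.pderiv i p) := rfl

/-- The augmentation as an `E_m`-linear map. -/
def extAlgAugₗ (m : ℕ) : ExtAlg m →ₗ[ExtAlg m] ZMod 2 where
  toFun := extAlgAug m
  map_add' := map_add _
  map_smul' := map_mul _

lemma ker_extAlgAugₗ (m : ℕ) : LinearMap.ker (extAlgAugₗ m) =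
    Ideal.span (Set.range fun i : Fin m => (Ideal.Quotient.mk _ (MvPolynomial.X i) : ExtAlg m)) := by
  apply le_antisymm
  · intro r hr
    obtain ⟨p, rfl⟩ := Ideal.Quotient.mk_surjective r
    have hp : MvPolynomial.eval (fun _ => 0) p = 0 := hr
    have : p ∈ Ideal.span (Set.range (MvPolynomial.X : Fin m → MvPolynomial (Fin m) (ZMod 2))) := by
      rw [← Set.image_univ, MvPolynomial.mem_ideal_span_X_image]
      intro a ha
      by_contra! h
      obtain rfl : a = 0 := by ext i; simpa using h i
      simp_all [← MvPolynomial.constantCoeff_eq]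
    have := Ideal.mem_map_of_mem (Ideal.Quotient.mk (Ideal.span (Set.range fun i : Fin m =>
      (MvPolynomial.X i : MvPolynomial (Fin m) (ZMod 2)) ^ 2))) this
    rwa [Ideal.map_span, ← Set.range_comp] at this
  · rw [Ideal.span_le]
    rintro _ ⟨i, rfl⟩
    change MvPolynomial.eval (fun _ => 0) (MvPolynomial.X i) = (0 : ZMod 2)
    simp

end Main

/-- For `m ≥ 1` and the exterior algebra `E_m` on `m` generators over `ℤ/2`, the group
`Ext^s_{E_m}(ℤ/2, ℤ/2)` has exactly `2 ^ binom(s+m-1, m-1)` elements: it is a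
`ℤ/2`-vector space of dimension `binom(s+m-1, m-1)`, the dimension in degree `s` of a
polynomial algebra on `m` generators. -/
theorem card_ext_exteriorAlgebra (m : ℕ) (hm : 1 ≤ m) (s : ℕ) :
    Nat.card (Abelian.Ext (ModuleCat.of (ExtAlg m) (ZMod 2))
      (ModuleCat.of (ExtAlg m) (ZMod 2)) s) = 2 ^ Nat.choose (s + m - 1) (m - 1) := by
  have : CharP (ExtAlg m) 2 := by
    have : Nontrivial (ExtAlg m) := (extAlgAug m).domain_nontrivial
    exact charP_of_injective_algebraMap (algebraMap (ZMod 2) (ExtAlg m)).injective 2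
  rw [card_ext_of_koszul (fun i => Ideal.Quotient.mk _ (MvPolynomial.X i)) ?_ (extAlgD m) ?_ ?_
    (extAlgAugₗ m) (ker_extAlgAugₗ m) (fun c => ?_) s]
  · rw [Nat.card_zmod, Fintype.card_fin, Nat.multichoose_eq, add_comm m s,
      ← Nat.choose_symm (by omega), show s + m - 1 - s = m - 1 by omega]
  · intro i
    rw [← map_pow, Ideal.Quotient.eq_zero_iff_mem]
    exact Ideal.subset_span ⟨i, rfl⟩
  · intro i r
    obtain ⟨p, rfl⟩ := Ideal.Quotient.mk_surjective r
    rw [← map_mul, extAlgD_mk, extAlgD_mk, Derivation.leibniz, MvPolynomial.pderiv_X_self,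
      map_add]
    simp [add_comm]
  · intro i j hij r
    obtain ⟨p, rfl⟩ := Ideal.Quotient.mk_surjective r
    rw [← map_mul, extAlgD_mk, extAlgD_mk, Derivation.leibniz,
      MvPolynomial.pderiv_X_of_ne hij.symm]
    simp
  · refine ⟨Ideal.Quotient.mk _ (MvPolynomial.C c), ?_⟩
    change MvPolynomial.eval (fun _ => 0) (MvPolynomial.C c) = c
    simp

end
end

section
/- Let R be a ring and let f : C → D be a morphism of ℕ-indexed (bounded below) chain complexes of R-modules such that every object C_n and D_n is a projective R-module. If f is a quasi-isomorphism (induces isomorphisms on all homology groups), then f is a chain homotopy equivalence: there exists a chain map g : D → C with g ∘ f chain homotopic to the identity of C and f ∘ g chain homotopic to the identity of D. -/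
open CategoryTheory

noncomputable section

/-- Let `R` be a ring and `f : C → D` a morphism of `ℕ`-indexed chain complexes of
`R`-modules whose objects are all projective.  If `f` is a quasi-isomorphism, then `f` is
a chain homotopy equivalence: there is a chain map `g : D → C` with `g ∘ f` chain
homotopic to `𝟙 C` and `f ∘ g` chain homotopic to `𝟙 D`. -/
theorem quasiIso_of_projective_is_homotopy_equiv
    {R : Type} [Ring R] {C D : ChainComplex (ModuleCat.{0} R) ℕ} (f : C ⟶ D)
    (hC : ∀ n : ℕ, Projective (C.X n)) (hD : ∀ n : ℕ, Projective (D.X n))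
    (hf : QuasiIso f) :
    ∃ g : D ⟶ C, Nonempty (Homotopy (f ≫ g) (𝟙 C)) ∧ Nonempty (Homotopy (g ≫ f) (𝟙 D)) := by
  -- Extended by zero to `ℤ`, both complexes are bounded-above cochain complexes of projectives,
  -- hence K-projective, and quasi-isomorphisms between K-projective complexes are homotopy
  -- equivalences.
  obtain ⟨e, rfl⟩ := (ChainComplex.quasiIso_iff_of_projective f).1 hf
  exact ⟨e.inv, ⟨e.homotopyHomInvId⟩, ⟨e.homotopyInvHomId⟩⟩

end
end
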